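/- arXiv:1712.08255 — 3 statements merged into one kernel-verified Lean document; each statement's English description precedes it below -/
import Mathlib

section
/- There exists an absolute constant D ∈ [1,∞) with the following property: for every Banach space X, every constant C ≥ 1, and every locally finite metric space A all of whose finite subsets admit C-bilipschitz embeddings into X, the space A admits a (D·C)-bilipschitz embedding into X. -/
/-- A metric space is locally finite if every closed ball of finite radius is finite. -/
def MetricLocallyFinite (A : Type*) [MetricSpace A] : Prop :=
  ∀ (x : A) (R : ℝ), (Metric.closedBall x R).Finite

/-- `f` is a `C`-bilipschitz embedding: there is `r > 0` with
`r * d(u,v) ≤ d(f u, f v) ≤ r * C * d(u,v)` for all `u, v`. -/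
def IsBilipschitzEmbedding {A Y : Type*} [MetricSpace A] [MetricSpace Y]
    (C : ℝ) (f : A → Y) : Prop :=
  ∃ r : ℝ, 0 < r ∧ ∀ u v : A,
    r * dist u v ≤ dist (f u) (f v) ∧ dist (f u) (f v) ≤ r * C * dist u v

universe u v

/-!
Normalised embeddings of the finite subsets of `A` are joined into one map: a point `a` is sent to
the position at time `κ * log (1 + d(a, o))` of a polygonal path through its images under
successive embeddings.

A convex combination of two embeddings need not be an embedding, but along an ultrafilter it is one
up to a factor `3`: if `(1 - s) xₙ + s xₘ` were small for generic `n, m`, then for generic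
`n, m, p` so would be
`xₘ = ((1 - s) xₙ + s xₘ) - ((1 - s) xₙ + s xₚ) + ((1 - s) xₘ + s xₚ)`.

The logarithm makes a point at distance `ρ` from `o` move with speed `O(κ / ρ)` along a path whose
edges have length `O(ρ)`, so replacing the time of the nearer of two points by that of the farther
one costs only `O(κ)` times their distance. Hence every factor `D > 3` is attained.
-/

open AffineMap Filter

section Interpolation

variable {X : Type*} [SeminormedAddCommGroup X] [NormedSpace ℝ X]

lemma norm_right_le_norm_lineMap_add (x y z : X) (s : ℝ) :
    ‖y‖ ≤ ‖lineMap x y s‖ + ‖lineMap x z s‖ + ‖lineMap y z s‖ := by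
  have hy : y = lineMap x y s - lineMap x z s + lineMap y z s := by
    simp only [lineMap_apply_module]
    module
  calc ‖y‖ = ‖lineMap x y s - lineMap x z s + lineMap y z s‖ := congrArg _ hy
    _ ≤ ‖lineMap x y s - lineMap x z s‖ + ‖lineMap y z s‖ := norm_add_le _ _
    _ ≤ ‖lineMap x y s‖ + ‖lineMap x z s‖ + ‖lineMap y z s‖ := by gcongr; exact norm_sub_le _ _

lemma eventually_eventually_le_norm_lineMap {ι : Type*} (U : Ultrafilter ι) {x : ι → X} {d : ℝ}
    (hx : ∀ᶠ n in U, d ≤ ‖x n‖) (s : ℝ) :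
    ∀ᶠ n in U, ∀ᶠ m in U, d / 3 ≤ ‖lineMap (x n) (x m) s‖ := by
  by_contra hcon
  have hsmall : ∀ᶠ n in U, ∀ᶠ m in U, ‖lineMap (x n) (x m) s‖ < d / 3 := by
    simpa only [← Ultrafilter.eventually_not, not_le] using hcon
  obtain ⟨n, hn⟩ := hsmall.exists
  obtain ⟨m, hnm, hm, hxm⟩ := (hn.and (hsmall.and hx)).exists
  obtain ⟨p, hnp, hmp⟩ := (hn.and hm).exists
  linarith [norm_right_le_norm_lineMap_add (x n) (x m) (x p) s]

lemma dist_lineMap_lineMap_le_of_dist_le {x₀ x₁ y₀ y₁ : X} {r s : ℝ} (hs : s ∈ Set.Icc 0 1)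
    (h₀ : dist x₀ y₀ ≤ r) (h₁ : dist x₁ y₁ ≤ r) :
    dist (lineMap x₀ x₁ s) (lineMap y₀ y₁ s) ≤ r := by
  rw [dist_eq_norm, ← mem_closedBall_zero_iff, ← vsub_eq_sub, lineMap_vsub_lineMap]
  refine (convex_closedBall (0 : X) r).lineMap_mem ?_ ?_ hs <;>
    simpa only [mem_closedBall_zero_iff, vsub_eq_sub, ← dist_eq_norm]

/-- The polygonal path with vertex `p k` at time `k : ℕ`, affine between consecutive natural
numbers. At negative times it continues the first edge, which keeps it Lipschitz on all of `ℝ`. -/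
noncomputable def polygonalPath (p : ℕ → X) (t : ℝ) : X :=
  lineMap (p ⌊t⌋₊) (p (⌊t⌋₊ + 1)) (t - ⌊t⌋₊)

lemma dist_polygonalPath_le {p : ℕ → X} {L : ℝ} (hp : ∀ k, dist (p k) (p (k + 1)) ≤ L)
    {s t : ℝ} (hst : s ≤ t) :
    dist (polygonalPath p s) (polygonalPath p t) ≤ L * (t - s) := by
  unfold polygonalPath
  rcases (Nat.floor_mono hst).eq_or_lt with hfloor | hfloor
  · rw [hfloor, dist_lineMap_lineMap, dist_comm, Real.dist_eq, sub_sub_sub_cancel_right,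
      abs_of_nonneg (sub_nonneg.2 hst), mul_comm]
    exact mul_le_mul_of_nonneg_right (hp _) (sub_nonneg.2 hst)
  · have hs : 0 ≤ 1 - (s - ⌊s⌋₊) := by linarith [Nat.lt_floor_add_one s]
    have ht : 0 ≤ t - ⌊t⌋₊ := sub_nonneg.2 (Nat.floor_le (Nat.pos_of_floor_pos (by omega)).le)
    have hfirst : dist (lineMap (p ⌊s⌋₊) (p (⌊s⌋₊ + 1)) (s - ⌊s⌋₊)) (p (⌊s⌋₊ + 1)) ≤
        (1 - (s - ⌊s⌋₊)) * L := by
      rw [dist_lineMap_right, Real.norm_of_nonneg hs]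
      exact mul_le_mul_of_nonneg_left (hp _) hs
    have hmiddle : dist (p (⌊s⌋₊ + 1)) (p ⌊t⌋₊) ≤ (⌊t⌋₊ - (⌊s⌋₊ + 1)) * L := by
      simpa [Nat.cast_sub (Nat.succ_le_of_lt hfloor)] using
        dist_le_Ico_sum_of_dist_le (f := p) hfloor (fun _ _ => hp _)
    have hlast : dist (p ⌊t⌋₊) (lineMap (p ⌊t⌋₊) (p (⌊t⌋₊ + 1)) (t - ⌊t⌋₊)) ≤
        (t - ⌊t⌋₊) * L := by
      rw [dist_left_lineMap, Real.norm_of_nonneg ht]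
      exact mul_le_mul_of_nonneg_left (hp _) ht
    linarith [dist_triangle4 (lineMap (p ⌊s⌋₊) (p (⌊s⌋₊ + 1)) (s - ⌊s⌋₊)) (p (⌊s⌋₊ + 1)) (p ⌊t⌋₊)
      (lineMap (p ⌊t⌋₊) (p (⌊t⌋₊ + 1)) (t - ⌊t⌋₊))]

end Interpolation

lemma exists_seq_forall_of_eventually_eventually {ι : Type*} {l : Filter ι} [l.NeBot]
    {P : ℕ → ι → ι → Prop} (h : ∀ k, ∀ᶠ n in l, ∀ᶠ m in l, P k n m) :
    ∃ N : ℕ → ι, ∀ k, P k (N k) (N (k + 1)) := by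
  have extend (k : ℕ) (n : {n // ∀ᶠ m in l, P k n m}) :
      ∃ m : {m // ∀ᶠ p in l, P (k + 1) m p}, P k n m := by
    obtain ⟨m, hnm, hm⟩ := (n.2.and (h (k + 1))).exists
    exact ⟨⟨m, hm⟩, hnm⟩
  choose next hnext using extend
  obtain ⟨n₀, hn₀⟩ := (h 0).exists
  let N (k : ℕ) : {n // ∀ᶠ m in l, P k n m} := Nat.rec ⟨n₀, hn₀⟩ next k
  exact ⟨fun k => (N k).1, fun k => hnext k (N k)⟩

/-- `f` multiplies the distances between points of `S` by factors between `a` and `b`: the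
two-sided estimate of `IsBilipschitzEmbedding`, localised to a set and with the scale made
explicit. -/
def BilipschitzOn {A Y : Type*} [PseudoMetricSpace A] [PseudoMetricSpace Y]
    (a b : ℝ) (f : A → Y) (S : Set A) : Prop :=
  ∀ u ∈ S, ∀ v ∈ S, a * dist u v ≤ dist (f u) (f v) ∧ dist (f u) (f v) ≤ b * dist u v

namespace BilipschitzOn

section Metric

variable {A Y : Type*} [PseudoMetricSpace A] [PseudoMetricSpace Y] {a b δ : ℝ} {S T : Set A}

lemma mono {f : A → Y} (hf : BilipschitzOn a b f T) (hST : S ⊆ T) : BilipschitzOn a b f S :=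
  fun u hu v hv => hf u (hST hu) v (hST hv)

lemma diagonal {F : ℝ → A → Y} {t : A → ℝ}
    (hF : ∀ v, BilipschitzOn a b (F (t v)) {x | t x ≤ t v})
    (hδ : ∀ u v, t u ≤ t v → dist (F (t u) u) (F (t v) u) ≤ δ * dist u v) :
    BilipschitzOn (a - δ) (b + δ) (fun x => F (t x) x) Set.univ := by
  intro u _ v _
  wlog huv : t u ≤ t v generalizing u v
  · simpa only [dist_comm] using this v trivial u trivial (le_of_not_ge huv)
  obtain ⟨hlower, hupper⟩ := hF v u huv v (le_refl (t v))
  have hmove := hδ u v huv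
  constructor
  · linarith [dist_triangle_left (F (t v) u) (F (t v) v) (F (t u) u)]
  · linarith [dist_triangle (F (t u) u) (F (t v) u) (F (t v) v)]

end Metric

section Blending

variable {A X ι : Type*} [PseudoMetricSpace A] [SeminormedAddCommGroup X] [NormedSpace ℝ X]
  {a b : ℝ} {f : ι → A → X}

lemma eventually_eventually_lineMap {U : Ultrafilter ι} {S : Set A} (hS : S.Finite)
    (hf : ∀ᶠ n in U, BilipschitzOn a b (f n) S) {s : ℝ} (hs : s ∈ Set.Icc 0 1) :
    ∀ᶠ n in U, ∀ᶠ m in U, BilipschitzOn (a / 3) b (fun x => lineMap (f n x) (f m x) s) S := by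
  have hlower : ∀ᶠ n in U, ∀ᶠ m in U, ∀ u ∈ S, ∀ v ∈ S,
      a * dist u v / 3 ≤ ‖lineMap (f n u - f n v) (f m u - f m v) s‖ := by
    simp only [eventually_all_finite hS]
    intro u hu v hv
    refine eventually_eventually_le_norm_lineMap U (x := fun n => f n u - f n v) ?_ s
    filter_upwards [hf] with n hn
    exact dist_eq_norm (f n u) (f n v) ▸ (hn u hu v hv).1
  filter_upwards [hlower, hf] with n hlower_n hn
  filter_upwards [hlower_n, hf] with m hlower_nm hm u hu v hv
  constructor
  · rw [div_mul_eq_mul_div, dist_eq_norm, ← vsub_eq_sub, lineMap_vsub_lineMap]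
    exact hlower_nm u hu v hv
  · exact dist_lineMap_lineMap_le_of_dist_le hs (hn u hu v hv).2 (hm u hu v hv).2

lemma exists_seq_polygonalPath {l : Filter ι} [l.NeBot]
    (hf : ∀ S : Set A, S.Finite → ∀ᶠ n in l, BilipschitzOn a b (f n) S)
    {t : A → ℝ} (ht₀ : ∀ x, 0 ≤ t x) (ht : ∀ τ, {x | t x ≤ τ}.Finite) :
    ∃ N : ℕ → ι, ∀ v,
      BilipschitzOn (a / 3) b (fun x => polygonalPath (fun k => f (N k) x) (t v))
        {x | t x ≤ t v} := by
  have hblend (k : ℕ) : ∀ᶠ n in Ultrafilter.of l, ∀ᶠ m in Ultrafilter.of l,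
      ∀ v ∈ {x | t x ≤ k + 1},
        BilipschitzOn (a / 3) b (fun x => lineMap (f n x) (f m x) (t v - ⌊t v⌋₊))
          {x | t x ≤ k + 1} := by
    simp only [eventually_all_finite (ht (k + 1))]
    intro v _
    refine eventually_eventually_lineMap (ht _) (Ultrafilter.of_le l (hf _ (ht _))) ⟨?_, ?_⟩
    · exact sub_nonneg.2 (Nat.floor_le (ht₀ v))
    · linarith [Nat.lt_floor_add_one (t v)]
  obtain ⟨N, hN⟩ := exists_seq_forall_of_eventually_eventually hblend
  refine ⟨N, fun v => ?_⟩
  have hv : t v ≤ ⌊t v⌋₊ + 1 := (Nat.lt_floor_add_one _).le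
  exact (hN ⌊t v⌋₊ v hv).mono fun x hx => le_trans hx hv

end Blending

end BilipschitzOn

lemma mul_log_one_add_sub_log_one_add_le {x y : ℝ} (hx : 0 ≤ x) (hxy : x ≤ y) :
    x * (Real.log (1 + y) - Real.log (1 + x)) ≤ y - x := by
  have hx₁ : 0 < 1 + x := by linarith
  have hy₁ : 0 < 1 + y := by linarith
  calc x * (Real.log (1 + y) - Real.log (1 + x))
      = x * Real.log ((1 + y) / (1 + x)) := by rw [Real.log_div hy₁.ne' hx₁.ne']
    _ ≤ x * ((1 + y) / (1 + x) - 1) :=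
        mul_le_mul_of_nonneg_left (Real.log_le_sub_one_of_pos (div_pos hy₁ hx₁)) hx
    _ = x / (1 + x) * (y - x) := by field_simp; ring
    _ ≤ 1 * (y - x) := by
        gcongr
        exact div_le_one_of_le₀ (by linarith) hx₁.le
    _ = y - x := one_mul _

/-- The time at which the point `x` is placed on its polygonal path: a slowly growing function of
its distance to the base point `o`. -/
noncomputable def logTime {A : Type*} [PseudoMetricSpace A] (κ : ℝ) (o x : A) : ℝ :=
  κ * Real.log (1 + dist x o)

namespace logTime

variable {A : Type*} [PseudoMetricSpace A] {κ : ℝ} {o : A}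

lemma nonneg (hκ : 0 ≤ κ) (x : A) : 0 ≤ logTime κ o x :=
  mul_nonneg hκ (Real.log_nonneg (le_add_of_nonneg_right dist_nonneg))

lemma le_iff_dist_le (hκ : 0 < κ) {x : A} {τ : ℝ} :
    logTime κ o x ≤ τ ↔ dist x o ≤ Real.exp (τ / κ) - 1 := by
  rw [logTime, ← le_div_iff₀' hκ, Real.log_le_iff_le_exp (by positivity), le_sub_iff_add_le']

lemma le_iff (hκ : 0 < κ) {x y : A} :
    logTime κ o x ≤ logTime κ o y ↔ dist x o ≤ dist y o := by
  rw [logTime, logTime, mul_le_mul_iff_right₀ hκ,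
    Real.log_le_log_iff (by positivity) (by positivity), add_le_add_iff_left]

lemma dist_mul_sub_le (hκ : 0 < κ) {x y : A} (hxy : logTime κ o x ≤ logTime κ o y) :
    dist x o * (logTime κ o y - logTime κ o x) ≤ κ * dist x y := by
  calc dist x o * (logTime κ o y - logTime κ o x)
      = κ * (dist x o * (Real.log (1 + dist y o) - Real.log (1 + dist x o))) := by
        unfold logTime; ring
    _ ≤ κ * (dist y o - dist x o) := by
        gcongr
        exact mul_log_one_add_sub_log_one_add_le dist_nonneg ((le_iff hκ).1 hxy)
    _ ≤ κ * dist x y := by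
        gcongr
        linarith [dist_triangle_left y o x]

end logTime

lemma MetricLocallyFinite.finite_logTime_le {A : Type*} [MetricSpace A]
    (hA : MetricLocallyFinite A) {κ : ℝ} (hκ : 0 < κ) (o : A) (τ : ℝ) :
    {x | logTime κ o x ≤ τ}.Finite := by
  simpa only [logTime.le_iff_dist_le hκ, Metric.closedBall] using hA o (Real.exp (τ / κ) - 1)

lemma dist_polygonalPath_logTime_le {A X : Type*} [PseudoMetricSpace A] [SeminormedAddCommGroup X]
    [NormedSpace ℝ X] {κ C : ℝ} (hκ : 0 < κ) (hC : 0 ≤ C) {o u v : A} {p : ℕ → X}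
    (hp : ∀ k, ‖p k‖ ≤ C * dist u o) (huv : logTime κ o u ≤ logTime κ o v) :
    dist (polygonalPath p (logTime κ o u)) (polygonalPath p (logTime κ o v)) ≤
      2 * C * κ * dist u v := by
  have hedge (k : ℕ) : dist (p k) (p (k + 1)) ≤ 2 * C * dist u o := by
    linarith [dist_le_norm_add_norm (p k) (p (k + 1)), hp k, hp (k + 1)]
  calc dist (polygonalPath p (logTime κ o u)) (polygonalPath p (logTime κ o v))
      ≤ 2 * C * dist u o * (logTime κ o v - logTime κ o u) := dist_polygonalPath_le hedge huv
    _ = 2 * C * (dist u o * (logTime κ o v - logTime κ o u)) := by ring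
    _ ≤ 2 * C * (κ * dist u v) :=
        mul_le_mul_of_nonneg_left (logTime.dist_mul_sub_le hκ huv) (by positivity)
    _ = 2 * C * κ * dist u v := by ring

section Embedding

variable {A X : Type*} [MetricSpace A] [NormedAddCommGroup X] [NormedSpace ℝ X] {C : ℝ}

lemma IsBilipschitzEmbedding.exists_normalized_extension {S : Set A} {f : S → X}
    (hf : IsBilipschitzEmbedding C f) (hC : 0 ≤ C) {o : A} (ho : o ∈ S) :
    ∃ g : A → X, BilipschitzOn 1 C g S ∧ ∀ x, ‖g x‖ ≤ C * dist x o := by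
  obtain ⟨r, hr, hf⟩ := hf
  let g : A → X := Function.extend (↑) (fun x : S => r⁻¹ • (f x - f ⟨o, ho⟩)) 0
  have hg (x : S) : g x = r⁻¹ • (f x - f ⟨o, ho⟩) := Subtype.val_injective.extend_apply _ _ x
  have hdist (x y : S) : dist (g x) (g y) = r⁻¹ * dist (f x) (f y) := by
    rw [hg, hg, dist_smul₀, dist_sub_right, Real.norm_of_nonneg (inv_nonneg.2 hr.le)]
  have hgS : BilipschitzOn 1 C g S := by
    intro u hu v hv
    rw [hdist ⟨u, hu⟩ ⟨v, hv⟩, le_inv_mul_iff₀ hr, inv_mul_le_iff₀ hr, one_mul, ← mul_assoc]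
    exact hf ⟨u, hu⟩ ⟨v, hv⟩
  refine ⟨g, hgS, fun x => ?_⟩
  by_cases hx : x ∈ S
  · have hgo : g o = 0 := by simpa using hg ⟨o, ho⟩
    simpa [hgo] using (hgS x hx o ho).2
  · have hgx : g x = 0 := Function.extend_apply' _ _ _ fun ⟨y, hy⟩ => hx (hy ▸ y.2)
    rw [hgx, norm_zero]
    positivity

lemma exists_family_bilipschitzOn_finite (hC : 0 ≤ C)
    (h : ∀ S : Set A, S.Finite → ∃ f : S → X, IsBilipschitzEmbedding C f) (o : A) :
    ∃ f : Finset A → A → X, (∀ F x, ‖f F x‖ ≤ C * dist x o) ∧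
      ∀ S : Set A, S.Finite → ∀ᶠ F in atTop, BilipschitzOn 1 C (f F) S := by
  have hnormalized (F : Finset A) :
      ∃ g : A → X, BilipschitzOn 1 C g (insert o F) ∧ ∀ x, ‖g x‖ ≤ C * dist x o := by
    obtain ⟨f, hf⟩ := h (insert o F) (F.finite_toSet.insert o)
    exact hf.exists_normalized_extension hC (Set.mem_insert o _)
  choose f hf hnorm using hnormalized
  refine ⟨f, hnorm, fun S hS => ?_⟩
  filter_upwards [eventually_ge_atTop hS.toFinset] with F hF
  exact (hf F).mono fun x hx => Set.mem_insert_of_mem o (hF (hS.mem_toFinset.2 hx))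

theorem MetricLocallyFinite.exists_bilipschitzOn_univ (hA : MetricLocallyFinite A) (o : A)
    (hC : 0 ≤ C) (h : ∀ S : Set A, S.Finite → ∃ f : S → X, IsBilipschitzEmbedding C f)
    {κ : ℝ} (hκ : 0 < κ) :
    ∃ f : A → X, BilipschitzOn (1 / 3 - 2 * C * κ) (C + 2 * C * κ) f Set.univ := by
  obtain ⟨f, hnorm, hf⟩ := exists_family_bilipschitzOn_finite hC h o
  obtain ⟨N, hN⟩ := BilipschitzOn.exists_seq_polygonalPath hf (logTime.nonneg hκ.le)
    (hA.finite_logTime_le hκ o)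
  exact ⟨_, BilipschitzOn.diagonal (F := fun τ x => polygonalPath (fun k => f (N k) x) τ) hN
    fun u _ huv => dist_polygonalPath_logTime_le hκ hC (fun k => hnorm (N k) u) huv⟩

theorem absolute_constant_finite_determination_general {D : ℝ} (hD : 3 < D) (hC : 1 ≤ C)
    (hA : MetricLocallyFinite A)
    (h : ∀ S : Set A, S.Finite → ∃ f : S → X, IsBilipschitzEmbedding C f) :
    ∃ f : A → X, IsBilipschitzEmbedding (D * C) f := by
  rcases isEmpty_or_nonempty A with hempty | ⟨⟨o⟩⟩
  · exact ⟨isEmptyElim, 1, one_pos, isEmptyElim⟩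
  have hC₀ : 0 < C := one_pos.trans_le hC
  have hD₀ : 0 < D + 1 := by linarith
  -- The solution of `1 + (1 / 3 - r) = D * r`, which makes the two distortion factors match.
  let r : ℝ := 4 / 3 / (D + 1)
  have hr : 0 < r := by positivity
  have hDr : (D + 1) * r = 4 / 3 := mul_div_cancel₀ _ hD₀.ne'
  have hr_lt : 0 < 1 / 3 - r := by nlinarith
  obtain ⟨f, hf⟩ :=
    hA.exists_bilipschitzOn_univ o hC₀.le h (κ := (1 / 3 - r) / (2 * C)) (by positivity)
  rw [mul_div_cancel₀ _ (by positivity), sub_sub_cancel] at hf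
  refine ⟨f, r, hr, fun u v => ⟨(hf u trivial v trivial).1, ?_⟩⟩
  calc dist (f u) (f v) ≤ (C + (1 / 3 - r)) * dist u v := (hf u trivial v trivial).2
    _ ≤ (C + (1 / 3 - r) * C) * dist u v := by gcongr; exact le_mul_of_one_le_right hr_lt.le hC
    _ = r * (D * C) * dist u v := by linear_combination (-C * dist u v) * hDr

end Embedding

theorem absolute_constant_finite_determination :
    ∃ D : ℝ, 1 ≤ D ∧
      ∀ (X : Type u) [NormedAddCommGroup X] [NormedSpace ℝ X] [CompleteSpace X]
        (A : Type v) [MetricSpace A] (C : ℝ), 1 ≤ C → MetricLocallyFinite A →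
        (∀ S : Set A, S.Finite → ∃ f : S → X, IsBilipschitzEmbedding C f) →
        ∃ f : A → X, IsBilipschitzEmbedding (D * C) f :=
  ⟨4, by norm_num, fun _ _ _ _ _ _ _ hC hA h =>
    absolute_constant_finite_determination_general (by norm_num) hC hA h⟩
end

section
/- Let 1 ≤ p < ∞. For every ε > 0 and every C ≥ 1, if A is a locally finite metric space all of whose finite subsets admit C-bilipschitz embeddings into ℓ_p, then A admits a ((1+ε)·C)-bilipschitz embedding into ℓ_p. -/
open scoped ENNReal

/-!
Fix a base point `O`. Let `g n`, for `n : ℤ`, embed the finite ball of radius `exp ((n + 1) / κ)`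
about `O`, scaled so that `d(x, y) ≤ ‖g n x - g n y‖ ≤ C d(x, y)`, and send `x` to the family
`(α n x • g n x)` in `ℓ^p(ℤ, X)`, where the unit vector `α x` of `ℓ^p(ℤ, ℝ)` is the value at
`κ log d(x, O)` of a Lipschitz path moving from basis vector to basis vector. Only balls that
contain `x` receive weight. If `d(x, O) ≤ d(y, O)`, the image of `x` minus the image of `y` is
`(α n y • (g n x - g n y)) + ((α n x - α n y) • g n x)`. The norm of the first summand lies between
`d(x, y)` and `C d(x, y)` since `‖α y‖ = 1`; that of the second is at most
`C d(x, O) ‖α x - α y‖ = O(κ C d(x, y))`, since `s (log t - log s) ≤ t - s`. Finally, `ℓ_p(ℓ_p)`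
is isometric to `ℓ_p`.
-/

open scoped lp

section Normalize

variable {V : Type*} [NormedAddCommGroup V] [NormedSpace ℝ V]

open NormedSpace

theorem norm_mul_norm_normalize_sub_normalize_le (x y : V) :
    ‖x‖ * ‖normalize x - normalize y‖ ≤ 2 * ‖x - y‖ := by
  have norm_normalize_le_one : ‖normalize y‖ ≤ 1 := by
    rcases eq_or_ne y 0 with rfl | hy
    · simp
    · exact (norm_normalize hy).le
  have smul_sub_eq : ‖x‖ • (normalize x - normalize y) =
      (x - y) + (‖y‖ - ‖x‖) • normalize y := by
    rw [smul_sub, sub_smul, norm_smul_normalize, norm_smul_normalize]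
    abel
  calc ‖x‖ * ‖normalize x - normalize y‖
      = ‖(x - y) + (‖y‖ - ‖x‖) • normalize y‖ := by rw [← smul_sub_eq, norm_smul, norm_norm]
    _ ≤ ‖x - y‖ + |‖y‖ - ‖x‖| * ‖normalize y‖ := by
        grw [norm_add_le, norm_smul, Real.norm_eq_abs]
    _ ≤ ‖x - y‖ + ‖x - y‖ * 1 := by
        grw [norm_normalize_le_one, norm_sub_rev x y, abs_norm_sub_norm_le y x]
    _ = 2 * ‖x - y‖ := by ring

end Normalize

section LpNorm

variable {p : ℝ≥0∞} [Fact (1 ≤ p)] {ι : Type*}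

theorem lp_norm_le_sum_of_support_subset {E : ι → Type*} [∀ i, NormedAddCommGroup (E i)]
    (u : lp E p) {s : Finset ι} (hs : ∀ i, u i ≠ 0 → i ∈ s) : ‖u‖ ≤ ∑ i ∈ s, ‖u i‖ := by
  classical
  have hp : 0 < p := zero_lt_one.trans_le Fact.out
  have eq_sum_single : u = ∑ i ∈ s, lp.single p i (u i) := by
    ext j
    rw [lp.coeFn_sum, Finset.sum_apply]
    simp only [lp.single_apply, Finset.sum_pi_single]
    grind
  calc ‖u‖ = ‖∑ i ∈ s, lp.single p i (u i)‖ := congrArg _ eq_sum_single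
    _ ≤ ∑ i ∈ s, ‖u i‖ := norm_sum_le_of_le s fun i _ => (lp.norm_single hp i (u i)).le

variable {X : Type*} [NormedAddCommGroup X] [NormedSpace ℝ X]

/-- The pointwise product `(a i • v i)` of scalar weights `a ∈ ℓ^p` with a bounded family of
vectors `v ∈ ℓ^∞`. -/
noncomputable def lpSMul (p : ℝ≥0∞) [Fact (1 ≤ p)] (ι X : Type*) [NormedAddCommGroup X]
    [NormedSpace ℝ X] : ℓ^p(ι, ℝ) →L[ℝ] ℓ^∞(ι, X) →L[ℝ] ℓ^p(ι, X) :=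
  lp.holderL (K := 1) p (fun _ => ContinuousLinearMap.lsmul ℝ ℝ)
    fun _ => ContinuousLinearMap.opNorm_lsmul_le

theorem lpSMul_apply (a : ℓ^p(ι, ℝ)) (v : ℓ^∞(ι, X)) (i : ι) :
    lpSMul p ι X a v i = a i • v i :=
  rfl

theorem norm_lpSMul_le {a : ℓ^p(ι, ℝ)} {v : ℓ^∞(ι, X)} {M : ℝ} (hM : 0 ≤ M)
    (h : ∀ i, a i ≠ 0 → ‖v i‖ ≤ M) : ‖lpSMul p ι X a v‖ ≤ M * ‖a‖ := by
  have hp : p ≠ 0 := (zero_lt_one.trans_le Fact.out).ne'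
  suffices ‖lpSMul p ι X a v‖ ≤ ‖M • a‖ by rwa [norm_smul, Real.norm_of_nonneg hM] at this
  refine lp.norm_mono hp fun i => ?_
  rw [lpSMul_apply, norm_smul, lp.coeFn_smul, Pi.smul_apply, norm_smul, Real.norm_of_nonneg hM,
    mul_comm]
  rcases eq_or_ne (a i) 0 with ha | ha
  · simp [ha]
  · grw [h i ha]

theorem le_norm_lpSMul {a : ℓ^p(ι, ℝ)} {v : ℓ^∞(ι, X)} {m : ℝ} (hm : 0 ≤ m)
    (h : ∀ i, a i ≠ 0 → m ≤ ‖v i‖) : m * ‖a‖ ≤ ‖lpSMul p ι X a v‖ := by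
  have hp : p ≠ 0 := (zero_lt_one.trans_le Fact.out).ne'
  suffices ‖m • a‖ ≤ ‖lpSMul p ι X a v‖ by rwa [norm_smul, Real.norm_of_nonneg hm] at this
  refine lp.norm_mono hp fun i => ?_
  rw [lpSMul_apply, norm_smul, lp.coeFn_smul, Pi.smul_apply, norm_smul, Real.norm_of_nonneg hm,
    mul_comm]
  rcases eq_or_ne (a i) 0 with ha | ha
  · simp [ha]
  · grw [← h i ha]

theorem lpSMul_sub_lpSMul (a b : ℓ^p(ι, ℝ)) (v w : ℓ^∞(ι, X)) :
    lpSMul p ι X a v - lpSMul p ι X b w =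
      lpSMul p ι X b (v - w) + lpSMul p ι X (a - b) v := by
  simp only [map_sub, sub_apply]
  abel

end LpNorm

section Uncurry

variable {p : ℝ≥0∞} [Fact (1 ≤ p)] {ι₁ ι₂ ι₃ E : Type*} [NormedAddCommGroup E]

theorem summable_norm_rpow_uncurry (hp : 0 < p.toReal) (u : ℓ^p(ι₁, ℓ^p(ι₂, E))) :
    Summable fun q : ι₁ × ι₂ => ‖u q.1 q.2‖ ^ p.toReal := by
  rw [summable_prod_of_nonneg fun q => by positivity]
  refine ⟨fun i => (lp.memℓp (u i)).summable hp, ?_⟩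
  simpa only [lp.norm_rpow_eq_tsum hp] using (lp.memℓp u).summable hp

theorem lp_norm_apply_apply_le_norm (u : ℓ^p(ι₁, ℓ^p(ι₂, E))) (i : ι₁) (j : ι₂) : ‖u i j‖ ≤ ‖u‖ :=
  have hp : p ≠ 0 := (zero_lt_one.trans_le Fact.out).ne'
  (lp.norm_apply_le_norm hp (u i) j).trans (lp.norm_apply_le_norm hp u i)

theorem memℓp_uncurry (e : ι₃ ≃ ι₁ × ι₂) (u : ℓ^p(ι₁, ℓ^p(ι₂, E))) :
    Memℓp (fun k => u (e k).1 (e k).2) p := by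
  rcases p.dichotomy with rfl | hp
  · exact memℓp_infty ⟨‖u‖, Set.forall_mem_range.2 fun k => lp_norm_apply_apply_le_norm u _ _⟩
  · exact memℓp_gen (e.summable_iff.2 (summable_norm_rpow_uncurry (by positivity) u))

/-- Uncurrying `ℓ^p(ι₁, ℓ^p(ι₂, E)) → ℓ^p(ι₁ × ι₂, E)`, with `ι₁ × ι₂` reindexed along `e`. -/
def lpUncurry (e : ι₃ ≃ ι₁ × ι₂) : ℓ^p(ι₁, ℓ^p(ι₂, E)) →+ ℓ^p(ι₃, E) where
  toFun u := ⟨fun k => u (e k).1 (e k).2, memℓp_uncurry e u⟩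
  map_zero' := rfl
  map_add' _ _ := rfl

theorem lpUncurry_apply (e : ι₃ ≃ ι₁ × ι₂) (u : ℓ^p(ι₁, ℓ^p(ι₂, E))) (k : ι₃) :
    lpUncurry e u k = u (e k).1 (e k).2 :=
  rfl

theorem norm_lpUncurry (e : ι₃ ≃ ι₁ × ι₂) (u : ℓ^p(ι₁, ℓ^p(ι₂, E))) : ‖lpUncurry e u‖ = ‖u‖ := by
  rcases p.dichotomy with rfl | hp
  · apply le_antisymm
    · exact lp.norm_le_of_forall_le (norm_nonneg u) fun k => lp_norm_apply_apply_le_norm u _ _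
    · refine lp.norm_le_of_forall_le (norm_nonneg _) fun i =>
        lp.norm_le_of_forall_le (norm_nonneg _) fun j => ?_
      simpa [lpUncurry_apply] using
        lp.norm_apply_le_norm ENNReal.top_ne_zero (lpUncurry e u) (e.symm (i, j))
  · have hp : 0 < p.toReal := by positivity
    rw [← Real.rpow_left_inj (norm_nonneg _) (norm_nonneg _) hp.ne']
    calc ‖lpUncurry e u‖ ^ p.toReal = ∑' k, ‖u (e k).1 (e k).2‖ ^ p.toReal :=
          lp.norm_rpow_eq_tsum hp _
      _ = ∑' q : ι₁ × ι₂, ‖u q.1 q.2‖ ^ p.toReal :=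
          e.tsum_eq fun q : ι₁ × ι₂ => ‖u q.1 q.2‖ ^ p.toReal
      _ = ∑' i, ∑' j, ‖u i j‖ ^ p.toReal := (summable_norm_rpow_uncurry hp u).tsum_prod
      _ = ‖u‖ ^ p.toReal := by simp only [lp.norm_rpow_eq_tsum hp]

theorem isometry_lpUncurry (e : ι₃ ≃ ι₁ × ι₂) :
    Isometry (lpUncurry e : ℓ^p(ι₁, ℓ^p(ι₂, E)) →+ ℓ^p(ι₃, E)) :=
  AddMonoidHomClass.isometry_of_norm _ (norm_lpUncurry e)

end Uncurry

section Tent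

/-- The tent function of height and half-width `1` centred at the integer `n`. -/
noncomputable def tent (t : ℝ) (n : ℤ) : ℝ := max 0 (1 - |t - n|)

theorem abs_sub_lt_one_of_tent_ne_zero {t : ℝ} {n : ℤ} (h : tent t n ≠ 0) : |t - n| < 1 := by
  by_contra! hle
  exact h (max_eq_left (by linarith))

theorem mem_of_tent_ne_zero {t : ℝ} {n : ℤ} (h : tent t n ≠ 0) :
    n ∈ ({⌊t⌋, ⌊t⌋ + 1} : Finset ℤ) := by
  obtain ⟨h₁, h₂⟩ := abs_lt.1 (abs_sub_lt_one_of_tent_ne_zero h)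
  have hle : ⌊t⌋ ≤ n := Int.lt_add_one_iff.1 (Int.floor_lt.2 (by push_cast; linarith))
  have hge : n - 1 ≤ ⌊t⌋ := Int.le_floor.2 (by push_cast; linarith)
  simp only [Finset.mem_insert, Finset.mem_singleton]
  omega

theorem abs_tent_sub_tent_le (s t : ℝ) (n : ℤ) : |tent s n - tent t n| ≤ |s - t| :=
  calc |tent s n - tent t n| ≤ |(1 - |s - n|) - (1 - |t - n|)| := by
        simpa only [tent, max_comm (0 : ℝ)] using abs_max_sub_max_le_abs _ _ _
    _ = |(|t - n| - |s - n|)| := by congr 1; ring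
    _ ≤ |(t - n) - (s - n)| := abs_abs_sub_abs_le_abs_sub _ _
    _ = |s - t| := by rw [sub_sub_sub_cancel_right, abs_sub_comm]

theorem half_le_tent_round (t : ℝ) : 1 / 2 ≤ tent t (round t) :=
  le_max_of_le_right (by linarith [abs_sub_round t])

theorem memℓp_tent (p : ℝ≥0∞) (t : ℝ) : Memℓp (tent t) p :=
  have finite_support : {n | tent t n ≠ 0}.Finite :=
    (Finset.finite_toSet _).subset fun _ => mem_of_tent_ne_zero
  (memℓp_zero finite_support).of_exponent_ge zero_le

variable (p : ℝ≥0∞)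

/-- The path in `ℓ^p(ℤ, ℝ)` that is affine on each interval `[n, n + 1]` and passes through the
`n`-th basis vector at time `n`. -/
noncomputable def tentPath (t : ℝ) : ℓ^p(ℤ, ℝ) := ⟨tent t, memℓp_tent p t⟩

variable [Fact (1 ≤ p)]

theorem norm_tentPath_sub_tentPath_le (s t : ℝ) :
    ‖tentPath p s - tentPath p t‖ ≤ 4 * |s - t| := by
  let S : Finset ℤ := {⌊s⌋, ⌊s⌋ + 1, ⌊t⌋, ⌊t⌋ + 1}
  have sub_apply (n : ℤ) : (tentPath p s - tentPath p t) n = tent s n - tent t n := rfl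
  have mem_S (n : ℤ) (hn : (tentPath p s - tentPath p t) n ≠ 0) : n ∈ S := by
    have hst : tent s n ≠ 0 ∨ tent t n ≠ 0 := by
      by_contra! h
      exact hn (by rw [sub_apply, h.1, h.2, sub_zero])
    have := hst.imp mem_of_tent_ne_zero mem_of_tent_ne_zero
    simp only [S, Finset.mem_insert, Finset.mem_singleton] at this ⊢
    tauto
  calc ‖tentPath p s - tentPath p t‖ ≤ ∑ n ∈ S, ‖(tentPath p s - tentPath p t) n‖ :=
        lp_norm_le_sum_of_support_subset _ mem_S
    _ ≤ S.card • |s - t| := Finset.sum_le_card_nsmul _ _ _ fun n _ => abs_tent_sub_tent_le s t n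
    _ ≤ 4 * |s - t| := by
        rw [nsmul_eq_mul]
        gcongr
        exact_mod_cast Finset.card_le_four

theorem half_le_norm_tentPath (t : ℝ) : 1 / 2 ≤ ‖tentPath p t‖ :=
  have hp : p ≠ 0 := (zero_lt_one.trans_le Fact.out).ne'
  calc 1 / 2 ≤ tentPath p t (round t) := half_le_tent_round t
    _ ≤ ‖tentPath p t (round t)‖ := Real.le_norm_self _
    _ ≤ ‖tentPath p t‖ := lp.norm_apply_le_norm hp _ _

/-- The radial projection of `tentPath` to the unit sphere of `ℓ^p(ℤ, ℝ)`. -/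
noncomputable def unitTentPath (t : ℝ) : ℓ^p(ℤ, ℝ) := NormedSpace.normalize (tentPath p t)

theorem norm_unitTentPath (t : ℝ) : ‖unitTentPath p t‖ = 1 :=
  NormedSpace.norm_normalize (norm_pos_iff.1 (by linarith [half_le_norm_tentPath p t]))

theorem norm_unitTentPath_sub_unitTentPath_le (s t : ℝ) :
    ‖unitTentPath p s - unitTentPath p t‖ ≤ 16 * |s - t| := by
  have : 1 / 2 * ‖unitTentPath p s - unitTentPath p t‖ ≤ 2 * (4 * |s - t|) :=
    calc 1 / 2 * ‖unitTentPath p s - unitTentPath p t‖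
        ≤ ‖tentPath p s‖ * ‖unitTentPath p s - unitTentPath p t‖ := by
          grw [half_le_norm_tentPath p s]
      _ ≤ 2 * ‖tentPath p s - tentPath p t‖ := norm_mul_norm_normalize_sub_normalize_le _ _
      _ ≤ 2 * (4 * |s - t|) := by grw [norm_tentPath_sub_tentPath_le]
  linarith

theorem lt_add_one_of_unitTentPath_ne_zero {t : ℝ} {n : ℤ} (h : unitTentPath p t n ≠ 0) :
    t < n + 1 := by
  have : tent t n ≠ 0 := right_ne_zero_of_mul (a := ‖tentPath p t‖⁻¹) h
  linarith [(abs_lt.1 (abs_sub_lt_one_of_tent_ne_zero this)).2]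

end Tent

section LogWeight

theorem mul_abs_log_sub_log_le {s t : ℝ} (hs : 0 ≤ s) (hst : s ≤ t) :
    s * |Real.log s - Real.log t| ≤ t - s := by
  rcases hs.eq_or_lt with rfl | hs
  · simpa using hst
  have ht : 0 < t := hs.trans_le hst
  calc s * |Real.log s - Real.log t| = s * Real.log (t / s) := by
        rw [abs_sub_comm, abs_of_nonneg (sub_nonneg.2 (Real.log_le_log hs hst)),
          Real.log_div ht.ne' hs.ne']
    _ ≤ s * (t / s - 1) := by grw [Real.log_le_sub_one_of_pos (div_pos ht hs)]
    _ = t - s := by field_simp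

variable (p : ℝ≥0∞) [Fact (1 ≤ p)] {A : Type*} [PseudoMetricSpace A]

/-- The weight `α x` of the gluing construction: `unitTentPath` at time `κ * log d(x, O)`.
The value at `x = O` is immaterial, and is the one given by the convention `log 0 = 0`. -/
noncomputable def logWeight (κ : ℝ) (O x : A) : ℓ^p(ℤ, ℝ) :=
  unitTentPath p (κ * Real.log (dist x O))

theorem norm_logWeight (κ : ℝ) (O x : A) : ‖logWeight p κ O x‖ = 1 := norm_unitTentPath p _

variable {κ : ℝ} {O x y : A}

theorem dist_le_exp_of_logWeight_ne_zero (hκ : 0 < κ) {n : ℤ} (h : logWeight p κ O x n ≠ 0) :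
    dist x O ≤ Real.exp ((n + 1) / κ) := by
  have : Real.log (dist x O) ≤ (n + 1) / κ := by
    rw [le_div_iff₀' hκ]
    exact (lt_add_one_of_unitTentPath_ne_zero p h).le
  exact Real.le_exp_of_log_le this

theorem dist_mul_norm_logWeight_sub_le (hκ : 0 ≤ κ) (hxy : dist x O ≤ dist y O) :
    dist x O * ‖logWeight p κ O x - logWeight p κ O y‖ ≤ 16 * κ * dist x y := by
  set s := dist x O
  set t := dist y O
  calc s * ‖logWeight p κ O x - logWeight p κ O y‖
      ≤ s * (16 * |κ * Real.log s - κ * Real.log t|) := by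
        gcongr
        exact norm_unitTentPath_sub_unitTentPath_le p _ _
    _ = 16 * κ * (s * |Real.log s - Real.log t|) := by
        rw [← mul_sub, abs_mul, abs_of_nonneg hκ]
        ring
    _ ≤ 16 * κ * (t - s) := by grw [mul_abs_log_sub_log_le dist_nonneg hxy]
    _ ≤ 16 * κ * dist x y := by
        gcongr
        linarith [dist_triangle_left y O x]

end LogWeight

section Gluing

variable {A X : Type*} [NormedAddCommGroup X]

/-- `g` is a `C`-bilipschitz embedding of `S` into a normed space, scaled so that its lower
constant is `1`, and extended to the whole space with at most linear growth away from the base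
point `O`. -/
structure IsBasedEmbeddingOn [PseudoMetricSpace A] (C : ℝ) (O : A) (S : Set A) (g : A → X) :
    Prop where
  norm_le : ∀ x, ‖g x‖ ≤ C * dist x O
  le_norm_sub : ∀ x ∈ S, ∀ y ∈ S, dist x y ≤ ‖g x - g y‖
  norm_sub_le : ∀ x ∈ S, ∀ y ∈ S, ‖g x - g y‖ ≤ C * dist x y

variable [NormedSpace ℝ X] {C : ℝ} {O : A}

theorem IsBilipschitzEmbedding.exists_isBasedEmbeddingOn [MetricSpace A] {S : Set A} {f : S → X}
    (hf : IsBilipschitzEmbedding C f) (hC : 0 ≤ C) (hO : O ∈ S) :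
    ∃ g : A → X, IsBasedEmbeddingOn C O S g := by
  obtain ⟨r, hr, hf⟩ := hf
  let g : A → X := Function.extend Subtype.val (fun x => r⁻¹ • (f x - f ⟨O, hO⟩)) 0
  have g_apply (x : S) : g x = r⁻¹ • (f x - f ⟨O, hO⟩) :=
    Subtype.val_injective.extend_apply _ _ x
  have g_base : g O = 0 := by simpa using g_apply ⟨O, hO⟩
  have norm_g_sub (x y : S) : ‖g x - g y‖ = dist (f x) (f y) / r := by
    rw [g_apply, g_apply, ← smul_sub, sub_sub_sub_cancel_right, norm_smul, dist_eq_norm,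
      Real.norm_of_nonneg (inv_pos.2 hr).le, inv_mul_eq_div]
  have norm_sub_le : ∀ x ∈ S, ∀ y ∈ S, ‖g x - g y‖ ≤ C * dist x y := by
    intro x hx y hy
    rw [norm_g_sub ⟨x, hx⟩ ⟨y, hy⟩, div_le_iff₀' hr, ← mul_assoc]
    exact (hf ⟨x, hx⟩ ⟨y, hy⟩).2
  refine ⟨g, fun x => ?_, fun x hx y hy => ?_, norm_sub_le⟩
  · by_cases hx : x ∈ S
    · simpa [g_base] using norm_sub_le x hx O hO
    · have g_eq_zero : g x = 0 := Function.extend_apply' _ _ _ (by simpa using hx)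
      rw [g_eq_zero, norm_zero]
      positivity
  · rw [norm_g_sub ⟨x, hx⟩ ⟨y, hy⟩, le_div_iff₀' hr]
    exact (hf ⟨x, hx⟩ ⟨y, hy⟩).1

variable (p : ℝ≥0∞) [Fact (1 ≤ p)]

/-- The map `x ↦ (α n x • g n x)` gluing the coordinate maps `g n = (G · n)` of `G` with the
weights `α = logWeight p κ O`. -/
noncomputable def logGlue [PseudoMetricSpace A] (κ : ℝ) (O : A) (G : A → ℓ^∞(ℤ, X)) (x : A) :
    ℓ^p(ℤ, X) :=
  lpSMul p ℤ X (logWeight p κ O x) (G x)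

theorem dist_logGlue_bounds_of_dist_le [PseudoMetricSpace A] {κ : ℝ} (hκ : 0 < κ) (hC : 0 ≤ C)
    {G : A → ℓ^∞(ℤ, X)}
    (hG : ∀ n : ℤ,
      IsBasedEmbeddingOn C O (Metric.closedBall O (Real.exp ((n + 1) / κ))) fun x => G x n)
    {x y : A} (hxy : dist x O ≤ dist y O) :
    (1 - 16 * κ * C) * dist x y ≤ dist (logGlue p κ O G x) (logGlue p κ O G y) ∧
      dist (logGlue p κ O G x) (logGlue p κ O G y) ≤ (1 + 16 * κ) * C * dist x y := by
  let α := logWeight p κ O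
  have mem_ball (n : ℤ) (hn : α y n ≠ 0) :
      x ∈ Metric.closedBall O (Real.exp ((n + 1) / κ)) ∧
        y ∈ Metric.closedBall O (Real.exp ((n + 1) / κ)) :=
    have hy := dist_le_exp_of_logWeight_ne_zero p hκ hn
    ⟨hxy.trans hy, hy⟩
  have main_ge : dist x y ≤ ‖lpSMul p ℤ X (α y) (G x - G y)‖ := by
    simpa [α, norm_logWeight] using le_norm_lpSMul (a := α y) (v := G x - G y) dist_nonneg
      fun n hn => (hG n).le_norm_sub x (mem_ball n hn).1 y (mem_ball n hn).2
  have main_le : ‖lpSMul p ℤ X (α y) (G x - G y)‖ ≤ C * dist x y := by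
    simpa [α, norm_logWeight] using norm_lpSMul_le (a := α y) (v := G x - G y) (by positivity)
      fun n hn => (hG n).norm_sub_le x (mem_ball n hn).1 y (mem_ball n hn).2
  have error_le : ‖lpSMul p ℤ X (α x - α y) (G x)‖ ≤ 16 * κ * C * dist x y :=
    calc ‖lpSMul p ℤ X (α x - α y) (G x)‖ ≤ C * dist x O * ‖α x - α y‖ :=
          norm_lpSMul_le (by positivity) fun n _ => (hG n).norm_le x
      _ = C * (dist x O * ‖α x - α y‖) := by ring
      _ ≤ C * (16 * κ * dist x y) := by grw [dist_mul_norm_logWeight_sub_le p hκ.le hxy]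
      _ = 16 * κ * C * dist x y := by ring
  rw [dist_eq_norm, logGlue, logGlue, lpSMul_sub_lpSMul]
  constructor
  · linarith [norm_sub_le_norm_add (lpSMul p ℤ X (α y) (G x - G y))
      (lpSMul p ℤ X (α x - α y) (G x))]
  · linarith [norm_add_le (lpSMul p ℤ X (α y) (G x - G y)) (lpSMul p ℤ X (α x - α y) (G x))]

variable [MetricSpace A]

theorem exists_lp_int_dist_bounds_of_finite_subsets {δ : ℝ} (hδ : 0 < δ) (hC : 0 ≤ C)
    (hA : MetricLocallyFinite A)
    (hfin : ∀ S : Set A, S.Finite → ∃ f : S → X, IsBilipschitzEmbedding C f) :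
    ∃ F : A → ℓ^p(ℤ, X), ∀ x y, (1 - δ * C) * dist x y ≤ dist (F x) (F y) ∧
      dist (F x) (F y) ≤ (1 + δ) * C * dist x y := by
  rcases isEmpty_or_nonempty A with _ | ⟨⟨O⟩⟩
  · exact ⟨isEmptyElim, isEmptyElim⟩
  obtain ⟨κ, hκ, rfl⟩ : ∃ κ, 0 < κ ∧ 16 * κ = δ := ⟨δ / 16, by positivity, by ring⟩
  have exists_local (n : ℤ) : ∃ g : A → X,
      IsBasedEmbeddingOn C O (Metric.closedBall O (Real.exp ((n + 1) / κ))) g := by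
    obtain ⟨f, hf⟩ := hfin _ (hA O (Real.exp ((n + 1) / κ)))
    exact hf.exists_isBasedEmbeddingOn hC (Metric.mem_closedBall_self (Real.exp_pos _).le)
  choose g hg using exists_local
  let G (x : A) : ℓ^∞(ℤ, X) := ⟨fun n => g n x,
    memℓp_infty ⟨C * dist x O, Set.forall_mem_range.2 fun n => (hg n).norm_le x⟩⟩
  refine ⟨logGlue p κ O G, fun x y => ?_⟩
  rcases le_total (dist x O) (dist y O) with hxy | hyx
  · exact dist_logGlue_bounds_of_dist_le p hκ hC hg hxy
  · rw [dist_comm x y, dist_comm (logGlue p κ O G x)]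
    exact dist_logGlue_bounds_of_dist_le p hκ hC hg hyx

theorem exists_isBilipschitzEmbedding_lp_int_of_finite_subsets {ε : ℝ} (hε : 0 < ε) (hC : 0 ≤ C)
    (hA : MetricLocallyFinite A)
    (hfin : ∀ S : Set A, S.Finite → ∃ f : S → X, IsBilipschitzEmbedding C f) :
    ∃ F : A → ℓ^p(ℤ, X), IsBilipschitzEmbedding ((1 + ε) * C) F := by
  -- `δ` is the solution of `1 + δ = (1 - δ * C) * (1 + ε)`.
  let δ := ε / (1 + C * (1 + ε))
  have hδ : 0 < δ := by positivity
  have ratio_pos : 0 < 1 - δ * C := by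
    have : 1 - δ * C = (1 + C) / (1 + C * (1 + ε)) := by simp only [δ]; field_simp; ring
    rw [this]
    positivity
  have ratio_eq : (1 + δ) * C = (1 - δ * C) * ((1 + ε) * C) := by
    simp only [δ]; field_simp; ring
  obtain ⟨F, hF⟩ := exists_lp_int_dist_bounds_of_finite_subsets p hδ hC hA hfin
  exact ⟨F, 1 - δ * C, ratio_pos, fun x y => ratio_eq ▸ hF x y⟩

end Gluing

theorem IsBilipschitzEmbedding.isometry_comp {A Y Z : Type*} [MetricSpace A] [MetricSpace Y]
    [MetricSpace Z] {C : ℝ} {f : A → Y} (hf : IsBilipschitzEmbedding C f) {φ : Y → Z}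
    (hφ : Isometry φ) : IsBilipschitzEmbedding C (φ ∘ f) := by
  simpa only [IsBilipschitzEmbedding, Function.comp_apply, hφ.dist_eq] using hf

theorem nonempty_equiv_int_prod (ι : Type*) [Infinite ι] : Nonempty (ι ≃ ℤ × ι) := by
  rw [← Cardinal.lift_mk_eq']
  simp

theorem ellp_finite_determination_general
    (p : ℝ≥0∞) [Fact (1 ≤ p)] {ι E : Type*} [Infinite ι] [NormedAddCommGroup E] [NormedSpace ℝ E]
    {ε C : ℝ} (hε : 0 < ε) (hC : 0 ≤ C)
    {A : Type*} [MetricSpace A] (hA : MetricLocallyFinite A)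
    (hfin : ∀ S : Set A, S.Finite → ∃ f : S → ℓ^p(ι, E), IsBilipschitzEmbedding C f) :
    ∃ f : A → ℓ^p(ι, E), IsBilipschitzEmbedding ((1 + ε) * C) f := by
  obtain ⟨F, hF⟩ := exists_isBilipschitzEmbedding_lp_int_of_finite_subsets p hε hC hA hfin
  obtain ⟨e⟩ := nonempty_equiv_int_prod ι
  exact ⟨lpUncurry e ∘ F, hF.isometry_comp (isometry_lpUncurry e)⟩

theorem ellp_finite_determination
    (p : ℝ≥0∞) [Fact (1 ≤ p)] (hp : p ≠ ∞)
    (ε C : ℝ) (hε : 0 < ε) (hC : 1 ≤ C)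
    (A : Type*) [MetricSpace A] (hA : MetricLocallyFinite A)
    (hfin : ∀ S : Set A, S.Finite →
      ∃ f : S → lp (fun _ : ℕ => ℝ) p, IsBilipschitzEmbedding C f) :
    ∃ f : A → lp (fun _ : ℕ => ℝ) p, IsBilipschitzEmbedding ((1 + ε) * C) f :=
  ellp_finite_determination_general p hε (zero_le_one.trans hC) hA hfin
end

section
/- Let p ∈ (1,∞), p ≠ 2, and let {X_n}_{n=1}^∞ be a nested family of finite-dimensional Banach spaces such that the ℓ_p-sum X = (⊕_{n=1}^∞ X_n)_p is strictly convex. Then there exists a locally finite metric space M such that every finite subset of M admits an isometric embedding into X, yet M itself admits no isometric embedding into X. -/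
open scoped ENNReal

/-!
Finitely many simple functions in `L_p` span an isometric copy of a subspace of `ℓ_p ^ n`, hence
embed isometrically into `X`. It remains to find a locally finite set of simple functions which as a
whole does not. Take the subgroup of `L_p` generated by the constant `1` and the indicators of
independent fair coin tosses, and thin it out to a locally finite net made of dyadic dilates. As `X`
is strictly convex, isometries into it preserve those midpoints that lie in the net, so that blowing
down an isometry of the net yields an additive norm-preserving map of the whole subgroup. Such a map
sends the tosses to a bounded sequence `x k` in `X` and `1` to a unit vector `z`. The differences
`x k - x l` tend to zero in every summand along an iterated ultrafilter limit, hence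
`‖z + (x k - x l)‖ ^ p = ‖z‖ ^ p + ‖x k - x l‖ ^ p`, as in the Brezis–Lieb lemma. In `L_p` the two
sides are `(2 + 2 ^ p) / 4` and `1 + 1 / 2`, which agree only for `p = 2`.
-/

open Filter Topology MeasureTheory

section DyadicNet

variable {E F : Type*} [NormedAddCommGroup E]

lemma metricLocallyFinite_of_finite_norm_le {s : Set E}
    (hs : ∀ R : ℝ, {y ∈ s | ‖y‖ ≤ R}.Finite) : MetricLocallyFinite s := by
  intro x R
  refine .of_finite_image ((hs (‖(x : E)‖ + R)).subset ?_) Subtype.val_injective.injOn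
  rintro _ ⟨y, hy, rfl⟩
  exact ⟨y.2, norm_le_of_mem_closedBall hy⟩

variable [NormedSpace ℝ E]

lemma tendsto_norm_two_pow_smul_atTop {x : E} (hx : x ≠ 0) :
    Tendsto (fun j : ℕ ↦ ‖(2 : ℝ) ^ j • x‖) atTop atTop := by
  simp only [norm_smul, norm_pow, Real.norm_ofNat]
  exact (tendsto_pow_atTop_atTop_of_one_lt one_lt_two).atTop_mul_const (norm_pos_iff.2 hx)

/-- The dyadic dilates `2 ^ j • x` of the elements `x` of a countable subgroup `V`, a dilate being
admitted once its norm is at least the index of `x` in an enumeration of `V`. Bounded sets thus see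
only finitely many `x`, yet every `x` has all its sufficiently large dilates in the net. -/
def dyadicNet (V : AddSubgroup E) [Encodable V] : Set E :=
  insert 0 {y | ∃ (x : V) (j : ℕ),
    (Encodable.encode x : ℝ) ≤ ‖(2 : ℝ) ^ j • (x : E)‖ ∧ (2 : ℝ) ^ j • (x : E) = y}

variable (V : AddSubgroup E) [Encodable V]

lemma dyadicNet_subset : dyadicNet V ⊆ V := by
  rintro _ (rfl | ⟨x, j, -, rfl⟩)
  · exact V.zero_mem
  · have : (2 : ℝ) ^ j • (x : E) = (2 ^ j : ℕ) • (x : E) := by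
      rw [← Nat.cast_smul_eq_nsmul ℝ, Nat.cast_pow, Nat.cast_ofNat]
    exact this ▸ V.nsmul_mem x.2 _

lemma metricLocallyFinite_dyadicNet : MetricLocallyFinite (dyadicNet V) := by
  refine metricLocallyFinite_of_finite_norm_le fun R ↦ ?_
  have finite_centers : {x : V | (x : E) ≠ 0 ∧ (Encodable.encode x : ℝ) ≤ R}.Finite := by
    refine ((Set.finite_Iic ⌊R⌋₊).preimage Encodable.encode_injective.injOn).subset ?_
    exact fun x hx ↦ Nat.le_floor hx.2
  have finite_scales : ∀ x : E, x ≠ 0 → {j : ℕ | ‖(2 : ℝ) ^ j • x‖ ≤ R}.Finite := by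
    intro x hx
    have := (tendsto_norm_two_pow_smul_atTop hx).eventually_gt_atTop R
    rw [← Nat.cofinite_eq_atTop, eventually_cofinite] at this
    simpa only [not_lt] using this
  refine ((finite_centers.biUnion fun x hx ↦ (finite_scales x hx.1).image
    fun j ↦ (2 : ℝ) ^ j • (x : E)).insert 0).subset ?_
  rintro _ ⟨rfl | ⟨x, j, hxj, rfl⟩, hR⟩
  · exact Set.mem_insert _ _
  · by_cases hx : (x : E) = 0
    · simp [hx]
    · exact .inr (Set.mem_biUnion ⟨hx, hxj.trans hR⟩ ⟨j, hR, rfl⟩)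

variable {V}

lemma eventually_two_pow_smul_mem_dyadicNet (x : V) :
    ∀ᶠ j : ℕ in atTop, (2 : ℝ) ^ j • (x : E) ∈ dyadicNet V := by
  by_cases hx : (x : E) = 0
  · simp [hx, dyadicNet]
  · filter_upwards [(tendsto_norm_two_pow_smul_atTop hx).eventually_ge_atTop
      (Encodable.encode x : ℝ)] with j hj
    exact .inr ⟨x, j, hj, rfl⟩

variable [NormedAddCommGroup F] [NormedSpace ℝ F]

lemma map_midpoint_of_isometry [StrictConvexSpace ℝ F] {s : Set E} {f : E → F}
    (hf : Isometry fun x : s ↦ f x) {a b : E} (ha : a ∈ s) (hb : b ∈ s)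
    (hm : midpoint ℝ a b ∈ s) : f (midpoint ℝ a b) = midpoint ℝ (f a) (f b) := by
  have dist_eq {x y : E} (hx : x ∈ s) (hy : y ∈ s) : dist (f x) (f y) = dist x y :=
    hf.dist_eq ⟨x, hx⟩ ⟨y, hy⟩
  apply eq_midpoint_of_dist_eq_half <;> simp [*, div_eq_inv_mul]

/-- The rescaling `x ↦ 2⁻ʲ (f (2ʲ x) - f 0)`, which straightens `f` out as `j → ∞`. -/
noncomputable def dyadicRescaling (f : E → F) (j : ℕ) (x : E) : F :=
  ((2 : ℝ) ^ j)⁻¹ • (f ((2 : ℝ) ^ j • x) - f 0)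

@[simp]
lemma dyadicRescaling_zero (f : E → F) (j : ℕ) : dyadicRescaling f j 0 = 0 := by
  simp [dyadicRescaling]

section Isometry

variable {f : E → F} (hf : Isometry fun x : dyadicNet V ↦ f x)
include hf

lemma eventually_norm_dyadicRescaling (x : V) :
    ∀ᶠ j in atTop, ‖dyadicRescaling f j x‖ = ‖(x : E)‖ := by
  filter_upwards [eventually_two_pow_smul_mem_dyadicNet x] with j hj
  have norm_sub : ‖f ((2 : ℝ) ^ j • (x : E)) - f 0‖ = ‖(2 : ℝ) ^ j • (x : E)‖ := by
    simpa [Subtype.dist_eq, dist_eq_norm] using hf.dist_eq ⟨_, hj⟩ ⟨0, Set.mem_insert _ _⟩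
  rw [dyadicRescaling, norm_smul, norm_sub, ← norm_smul, inv_smul_smul₀ (by positivity)]

variable [StrictConvexSpace ℝ F]

-- `2ʲ (x + y)` is the midpoint of `2ʲ⁺¹ x` and `2ʲ⁺¹ y`.
lemma eventually_dyadicRescaling_add (x y : V) : ∀ᶠ j in atTop,
    dyadicRescaling f j (x + y : V) =
      dyadicRescaling f (j + 1) x + dyadicRescaling f (j + 1) y := by
  filter_upwards [eventually_two_pow_smul_mem_dyadicNet (x + y),
    (tendsto_add_atTop_nat 1).eventually (eventually_two_pow_smul_mem_dyadicNet x),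
    (tendsto_add_atTop_nat 1).eventually (eventually_two_pow_smul_mem_dyadicNet y)]
    with j hxy hx hy
  have midpoint_eq : midpoint ℝ ((2 : ℝ) ^ (j + 1) • (x : E)) ((2 : ℝ) ^ (j + 1) • (y : E)) =
      (2 : ℝ) ^ j • ((x + y : V) : E) := by
    rw [midpoint_eq_smul_add, ← smul_add, smul_smul, pow_succ', invOf_eq_inv,
      inv_mul_cancel_left₀ two_ne_zero, AddSubgroup.coe_add]
  have map_midpoint := map_midpoint_of_isometry hf hx hy (midpoint_eq ▸ hxy)
  rw [midpoint_eq, midpoint_eq_smul_add, invOf_eq_inv] at map_midpoint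
  rw [dyadicRescaling, dyadicRescaling, dyadicRescaling, map_midpoint, pow_succ]
  module

lemma exists_eventually_dyadicRescaling_eq (x : V) :
    ∃ v : F, ∀ᶠ j in atTop, dyadicRescaling f j x = v := by
  obtain ⟨N, hN⟩ := eventually_atTop.1 (eventually_dyadicRescaling_add hf x 0)
  simp only [add_zero, ZeroMemClass.coe_zero, dyadicRescaling_zero] at hN
  exact ⟨_, eventually_atTop.2 ⟨N, fun j hj ↦
    Nat.le_induction rfl (fun k hk ih ↦ (hN k hk).symm.trans ih) j hj⟩⟩

end Isometry

theorem exists_addMonoidHom_norm_eq_of_isometry_dyadicNet [StrictConvexSpace ℝ F]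
    {f : dyadicNet V → F} (hf : Isometry f) : ∃ g : V →+ F, ∀ x, ‖g x‖ = ‖x‖ := by
  obtain ⟨f, rfl⟩ : ∃ f' : E → F, (fun x : dyadicNet V ↦ f' x) = f :=
    ⟨_, funext (Subtype.val_injective.extend_apply f 0)⟩
  choose g hg using exists_eventually_dyadicRescaling_eq hf
  have map_add (x y : V) : g (x + y) = g x + g y := by
    have shift {x} := (tendsto_add_atTop_nat 1).eventually (hg x)
    obtain ⟨j, hj, hxy, hx, hy⟩ := ((eventually_dyadicRescaling_add hf x y).and
      ((hg (x + y)).and (shift.and shift))).exists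
    rw [← hxy, hj, hx, hy]
  refine ⟨AddMonoidHom.mk' g map_add, fun x ↦ ?_⟩
  obtain ⟨j, hj, hx⟩ := ((eventually_norm_dyadicRescaling hf x).and (hg x)).exists
  rw [AddMonoidHom.mk'_apply, ← hx, hj, AddSubgroup.coe_norm]

end DyadicNet

section SimpleFunctions

lemma Lp_norm_rpow_eq_integral {α E : Type*} {m : MeasurableSpace α} {μ : Measure α}
    [NormedAddCommGroup E] {p : ℝ≥0∞} (hp0 : p ≠ 0) (hptop : p ≠ ∞) (f : Lp E p μ) :
    ‖f‖ ^ p.toReal = ∫ x, ‖f x‖ ^ p.toReal ∂μ := by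
  rw [Lp.norm_def, (Lp.memLp f).eLpNorm_eq_integral_rpow_norm hp0 hptop,
    ENNReal.toReal_ofReal (by positivity),
    Real.rpow_inv_rpow (by positivity) (ENNReal.toReal_pos hp0 hptop).ne']

variable {α : Type*} [MeasurableSpace α] {μ : Measure α} {p : ℝ≥0∞} {κ : Type*} [Finite κ]

/-- The simple function `x ↦ (f k x)ₖ`, whose fibres form a common refinement of the partitions
underlying finitely many simple functions `f k`. -/
def jointSimpleFunc {β : Type*} [MeasurableSpace β] (f : κ → SimpleFunc α β) :
    SimpleFunc α (κ → β) where
  toFun x k := f k x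
  measurableSet_fiber' c := by
    have : (fun x k ↦ f k x) ⁻¹' {c} = ⋂ k, f k ⁻¹' {c k} := by
      ext x
      simp [funext_iff]
    exact this ▸ .iInter fun k ↦ (f k).measurableSet_fiber (c k)
  finite_range' := by
    refine (Set.Finite.pi' fun k ↦ (f k).finite_range).subset ?_
    rintro _ ⟨x, rfl⟩ k
    exact ⟨x, rfl⟩

lemma norm_sub_rpow_eq_sum_jointSimpleFunc [Fact (1 ≤ p)] (hptop : p ≠ ∞)
    (f : κ → Lp.simpleFunc ℝ p μ) (a b : κ) :
    let J := jointSimpleFunc fun k ↦ Lp.simpleFunc.toSimpleFunc (f k)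
    ‖f a - f b‖ ^ p.toReal = ∑ c ∈ J.range, μ.real (J ⁻¹' {c}) * |c a - c b| ^ p.toReal := by
  intro J
  cases nonempty_fintype κ
  have hp0 : p ≠ 0 := (zero_lt_one.trans_le Fact.out).ne'
  have integrable : Integrable J μ := .of_eval fun k ↦
    (SimpleFunc.memLp_iff_integrable hp0 hptop).1 (Lp.simpleFunc.memLp (f k))
  let h (c : κ → ℝ) : ℝ := |c a - c b| ^ p.toReal
  have h_zero : h 0 = 0 := by simp [h, (ENNReal.toReal_pos hp0 hptop).ne']
  have integrable_map : Integrable (J.map h) μ := SimpleFunc.integrable_iff_finMeasSupp.2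
    ((SimpleFunc.integrable_iff_finMeasSupp.1 integrable).map h_zero)
  calc ‖f a - f b‖ ^ p.toReal
    _ = ∫ x, ‖(f a - f b : Lp ℝ p μ) x‖ ^ p.toReal ∂μ :=
      Lp_norm_rpow_eq_integral hp0 hptop (f a - f b : Lp ℝ p μ)
    _ = ∫ x, J.map h x ∂μ := by
      refine integral_congr_ae ?_
      filter_upwards [Lp.coeFn_sub (f a : Lp ℝ p μ) (f b),
        Lp.simpleFunc.toSimpleFunc_eq_toFun (f a), Lp.simpleFunc.toSimpleFunc_eq_toFun (f b)]
        with x hsub ha hb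
      rw [hsub, Pi.sub_apply, ← ha, ← hb, Real.norm_eq_abs]
      rfl
    _ = ∑ c ∈ J.range, μ.real (J ⁻¹' {c}) * |c a - c b| ^ p.toReal := by
      rw [← SimpleFunc.integral_eq_integral _ integrable_map,
        SimpleFunc.map_integral _ _ integrable h_zero]
      rfl

variable {ι : Type*} {X : ι → Type*} [∀ i, NormedAddCommGroup (X i)] [∀ i, NormedSpace ℝ (X i)]
  [Fact (1 ≤ p)]

lemma exists_linearMap_norm_rpow_eq_sum (hptop : p ≠ ∞) (hX : {i | Nontrivial (X i)}.Infinite)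
    {β : Type*} [Fintype β] {w : β → ℝ} (hw : ∀ b, 0 ≤ w b) :
    ∃ T : (β → ℝ) →ₗ[ℝ] lp X p, ∀ c, ‖T c‖ ^ p.toReal = ∑ b, w b * |c b| ^ p.toReal := by
  classical
  have hq : 0 < p.toReal := ENNReal.toReal_pos (zero_lt_one.trans_le Fact.out).ne' hptop
  obtain ⟨emb, nontrivial⟩ : ∃ emb : β ↪ ι, ∀ b, Nontrivial (X (emb b)) :=
    ⟨(Fintype.equivFin β).toEmbedding.trans <| Fin.valEmbedding.trans <|
      hX.natEmbedding.trans <| .subtype _, fun b ↦ (hX.natEmbedding _ (Fintype.equivFin β b)).2⟩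
  have exists_unit (i : ι) : ∃ e : X i, Nontrivial (X i) → ‖e‖ = 1 := by
    by_cases h : Nontrivial (X i)
    · exact (exists_norm_eq (X i) zero_le_one).imp fun _ he _ ↦ he
    · exact ⟨0, fun h' ↦ absurd h' h⟩
  choose e norm_e using exists_unit
  let T : (β → ℝ) →ₗ[ℝ] lp X p := ∑ b, lp.lsingle p (emb b) ∘ₗ
    (w b ^ (p.toReal)⁻¹ • LinearMap.proj (R := ℝ) (φ := fun _ : β ↦ ℝ) b).smulRight (e (emb b))
  refine ⟨T, fun c ↦ ?_⟩
  let x (i : ι) : X i := Function.extend emb (fun b ↦ w b ^ (p.toReal)⁻¹ * c b) 0 i • e i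
  have x_emb (b : β) : x (emb b) = (w b ^ (p.toReal)⁻¹ * c b) • e (emb b) := by
    simp only [x, emb.injective.extend_apply]
  have norm_x (b : β) : ‖x (emb b)‖ ^ p.toReal = w b * |c b| ^ p.toReal := by
    rw [x_emb, norm_smul, norm_e _ (nontrivial b), mul_one, Real.norm_eq_abs, abs_mul,
      abs_of_nonneg (Real.rpow_nonneg (hw b) _),
      Real.mul_rpow (Real.rpow_nonneg (hw b) _) (abs_nonneg _), Real.rpow_inv_rpow (hw b) hq.ne']
  have T_eq : T c = ∑ i ∈ Finset.univ.map emb, lp.single p i (x i) := by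
    simp only [T, LinearMap.sum_apply, Finset.sum_map, x_emb]
    rfl
  rw [T_eq, lp.norm_sum_single hq, Finset.sum_map]
  exact Finset.sum_congr rfl fun b _ ↦ norm_x b

theorem exists_dist_eq_of_simpleFunc (hptop : p ≠ ∞) (hX : {i | Nontrivial (X i)}.Infinite)
    (f : κ → Lp.simpleFunc ℝ p μ) :
    ∃ T : κ → lp X p, ∀ a b, dist (T a) (T b) = dist (f a) (f b) := by
  let J := jointSimpleFunc fun k ↦ Lp.simpleFunc.toSimpleFunc (f k)
  obtain ⟨T, norm_T⟩ := exists_linearMap_norm_rpow_eq_sum hptop hX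
    (w := fun c : J.range ↦ μ.real (J ⁻¹' {(c : κ → ℝ)})) fun _ ↦ measureReal_nonneg
  refine ⟨fun a ↦ T fun c ↦ (c : κ → ℝ) a, fun a b ↦ ?_⟩
  rw [dist_eq_norm, dist_eq_norm, ← map_sub]
  have hq : p.toReal ≠ 0 := (ENNReal.toReal_pos (zero_lt_one.trans_le Fact.out).ne' hptop).ne'
  rw [← Real.rpow_left_inj (norm_nonneg _) (norm_nonneg _) hq, norm_T,
    norm_sub_rpow_eq_sum_jointSimpleFunc hptop]
  exact Finset.sum_coe_sort J.range fun c ↦ μ.real (J ⁻¹' {c}) * |c a - c b| ^ p.toReal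

end SimpleFunctions

section CoinTosses

lemma norm_const_add_indicator_sub_indicator_rpow {Ω : Type*} [MeasurableSpace Ω] {μ : Measure Ω}
    [IsProbabilityMeasure μ] {p : ℝ≥0∞} (hp0 : p ≠ 0) (hptop : p ≠ ∞) {A B : Set Ω}
    (hA : MeasurableSet A) (hB : MeasurableSet B) (t : ℝ) :
    ‖Lp.const p μ t + (indicatorConstLp p hA (measure_ne_top μ A) 1 -
        indicatorConstLp p hB (measure_ne_top μ B) 1)‖ ^ p.toReal =
      |t| ^ p.toReal + μ.real (A \ B) * (|t + 1| ^ p.toReal - |t| ^ p.toReal) +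
        μ.real (B \ A) * (|t - 1| ^ p.toReal - |t| ^ p.toReal) := by
  calc _
    _ = ∫ ω, |t| ^ p.toReal + (A \ B).indicator (fun _ ↦ |t + 1| ^ p.toReal - |t| ^ p.toReal) ω +
          (B \ A).indicator (fun _ ↦ |t - 1| ^ p.toReal - |t| ^ p.toReal) ω ∂μ := by
      rw [Lp_norm_rpow_eq_integral hp0 hptop]
      refine integral_congr_ae ?_
      set f : Lp ℝ p μ := indicatorConstLp p hA (measure_ne_top μ A) 1 with hf
      set g : Lp ℝ p μ := indicatorConstLp p hB (measure_ne_top μ B) 1 with hg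
      filter_upwards [Lp.coeFn_add (Lp.const p μ t) (f - g), Lp.coeFn_sub f g,
        Lp.coeFn_const p μ t, hf ▸ indicatorConstLp_coeFn, hg ▸ indicatorConstLp_coeFn]
        with ω hadd hsub hconst hf hg
      rw [hadd, Pi.add_apply, hsub, Pi.sub_apply, hconst, hf, hg, Real.norm_eq_abs]
      by_cases ω ∈ A <;> by_cases ω ∈ B <;> simp [*, sub_eq_add_neg]
    _ = _ := by
      have integrable {C : Set Ω} (hC : MeasurableSet C) (c : ℝ) :
          Integrable (C.indicator fun _ ↦ c) μ := (integrable_const c).indicator hC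
      have hAB := integrable (hA.diff hB)
      have hBA := integrable (hB.diff hA)
      rw [integral_add (by fun_prop) (hBA _), integral_add (by fun_prop) (hAB _),
        integral_indicator_const _ (hA.diff hB), integral_indicator_const _ (hB.diff hA)]
      simp only [integral_const, probReal_univ, one_mul, smul_eq_mul]

/-- The law of a sequence of independent fair coin tosses. -/
noncomputable def coinMeasure : Measure (ℕ → Bool) :=
  Measure.infinitePi fun _ ↦ (PMF.uniformOfFintype Bool).toMeasure

instance : IsProbabilityMeasure coinMeasure :=
  inferInstanceAs (IsProbabilityMeasure (Measure.infinitePi _))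

/-- The event that the `k`-th toss comes up heads. -/
def headsAt (k : ℕ) : Set (ℕ → Bool) := (fun ω ↦ ω k) ⁻¹' {true}

lemma measurableSet_headsAt (k : ℕ) : MeasurableSet (headsAt k) :=
  measurable_pi_apply k (measurableSet_singleton true)

lemma coinMeasure_real_headsAt_diff {k l : ℕ} (h : k ≠ l) :
    coinMeasure.real (headsAt k \ headsAt l) = 1 / 4 := by
  have preimage : headsAt k \ headsAt l = (fun ω ↦ (ω k, ω l)) ⁻¹' ({true} ×ˢ {false}) := by
    ext
    simp [headsAt]
  rw [preimage, ← map_measureReal_apply (by fun_prop) .of_discrete, coinMeasure,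
    Measure.infinitePi_map_eval_prod h, measureReal_prod_prod]
  norm_num [measureReal_def]

variable (p : ℝ≥0∞)

/-- The indicator of heads at the `k`-th toss, as an element of `L_p`. -/
noncomputable def headsIndicator (k : ℕ) : Lp ℝ p coinMeasure :=
  indicatorConstLp p (measurableSet_headsAt k) (measure_ne_top _ _) 1

variable {p}

lemma norm_const_add_headsIndicator_sub_rpow (hp0 : p ≠ 0) (hptop : p ≠ ∞) (t : ℝ) {k l : ℕ}
    (h : k ≠ l) :
    ‖Lp.const p coinMeasure t + (headsIndicator p k - headsIndicator p l)‖ ^ p.toReal =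
      (2 * |t| ^ p.toReal + |t + 1| ^ p.toReal + |t - 1| ^ p.toReal) / 4 := by
  rw [headsIndicator, headsIndicator, norm_const_add_indicator_sub_indicator_rpow hp0 hptop,
    coinMeasure_real_headsAt_diff h, coinMeasure_real_headsAt_diff h.symm]
  ring

lemma norm_headsIndicator_le (k : ℕ) : ‖headsIndicator p k‖ ≤ 1 := by
  refine norm_indicatorConstLp_le.trans ?_
  rw [norm_one, one_mul]
  exact Real.rpow_le_one measureReal_nonneg measureReal_le_one (by positivity)

lemma countable_addSubgroupClosure {G : Type*} [AddCommGroup G] {s : Set G} (hs : s.Countable) :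
    Countable (AddSubgroup.closure s) := by
  have := hs.to_subtype
  rw [← Submodule.span_int_eq_addSubgroupClosure, ← Subtype.range_coe (s := s)]
  exact inferInstanceAs (Countable (Submodule.span ℤ (Set.range _)))

variable (p) in
/-- The additive group of random variables generated by the constant `1` and the coin tosses. -/
noncomputable def coinSubgroup : AddSubgroup (Lp ℝ p coinMeasure) :=
  AddSubgroup.closure (insert (Lp.const p coinMeasure 1) (Set.range (headsIndicator p)))

instance : Countable (coinSubgroup p) :=
  countable_addSubgroupClosure ((Set.countable_range _).insert _)

lemma coinSubgroup_le_simpleFunc : coinSubgroup p ≤ Lp.simpleFunc ℝ p coinMeasure := by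
  rw [coinSubgroup, AddSubgroup.closure_le, Set.insert_subset_iff, Set.range_subset_iff]
  refine ⟨?_, fun k ↦ ?_⟩
  · rw [← indicatorConstLp_univ]
    exact (Lp.simpleFunc.indicatorConst p .univ (measure_ne_top _ _) 1).2
  · exact (Lp.simpleFunc.indicatorConst p (measurableSet_headsAt k) (measure_ne_top _ _) 1).2

end CoinTosses

section BrezisLieb

variable {ι : Type*} {X : ι → Type*} [∀ i, NormedAddCommGroup (X i)] {p : ℝ≥0∞}

lemma norm_sum_single_add_rpow [DecidableEq ι] (hq : 0 < p.toReal) (s : Finset ι) (z : ∀ i, X i)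
    (y : lp X p) :
    ‖∑ i ∈ s, lp.single p i (z i) + y‖ ^ p.toReal =
      ∑ i ∈ s, ‖z i + y i‖ ^ p.toReal + (‖y‖ ^ p.toReal - ∑ i ∈ s, ‖y i‖ ^ p.toReal) := by
  set w := ∑ i ∈ s, lp.single p i (z i) + y with w_def
  have w_apply : ∀ i ∈ s, w i = z i + y i := by
    intro i hi
    simp only [w_def, lp.coeFn_add, lp.coeFn_sum, lp.coeFn_single, Pi.add_apply, Finset.sum_apply,
      Finset.sum_pi_single, if_pos hi]
  have compl_eq : w - ∑ i ∈ s, lp.single p i (w i) = y - ∑ i ∈ s, lp.single p i (y i) := by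
    rw [Finset.sum_congr rfl fun i hi ↦ congrArg (lp.single p i) (w_apply i hi)]
    simp only [w_def, lp.single_add, Finset.sum_add_distrib]
    abel
  have norm_w := lp.norm_compl_sum_single hq w s
  have sum_w : ∑ i ∈ s, ‖w i‖ ^ p.toReal = ∑ i ∈ s, ‖z i + y i‖ ^ p.toReal :=
    Finset.sum_congr rfl fun i hi ↦ by rw [w_apply i hi]
  rw [compl_eq, lp.norm_compl_sum_single hq, sum_w] at norm_w
  linarith

variable [Fact (1 ≤ p)]

/- The norms `‖P z + y a‖`, for `P` the projection onto finitely many summands, converge uniformly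
in `a` to `‖z + y a‖`, so the limits along `l` and in `P` can be interchanged. -/
theorem tendsto_norm_add_of_tendsto_coord_zero (hptop : p ≠ ∞) {α : Type*} {l : Filter α}
    {y : α → lp X p} (hy : ∀ i, Tendsto (fun a ↦ y a i) l (𝓝 0)) {d : ℝ}
    (hd : Tendsto (fun a ↦ ‖y a‖) l (𝓝 d)) (z : lp X p) :
    Tendsto (fun a ↦ ‖z + y a‖) l (𝓝 ((‖z‖ ^ p.toReal + d ^ p.toReal) ^ p.toReal⁻¹)) := by
  classical
  have hq : 0 < p.toReal := ENNReal.toReal_pos (zero_lt_one.trans_le Fact.out).ne' hptop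
  have uniform : TendstoUniformly (fun (s : Finset ι) a ↦ ‖∑ i ∈ s, lp.single p i (z i) + y a‖)
      (fun a ↦ ‖z + y a‖) atTop := by
    rw [Metric.tendstoUniformly_iff]
    intro ε hε
    filter_upwards [Metric.tendsto_nhds.1 (lp.hasSum_single hptop z) ε hε] with s hs a
    rw [dist_comm, dist_eq_norm] at hs
    exact (abs_norm_sub_norm_le _ _).trans_lt (by rwa [add_sub_add_right_eq_sub])
  have truncated (s : Finset ι) : Tendsto (fun a ↦ ‖∑ i ∈ s, lp.single p i (z i) + y a‖) l
      (𝓝 ((∑ i ∈ s, ‖z i‖ ^ p.toReal + d ^ p.toReal) ^ p.toReal⁻¹)) := by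
    have sum_y := tendsto_finsetSum s fun i _ ↦ ((hy i).norm.rpow_const (.inr hq.le))
    have sum_add := tendsto_finsetSum s fun i _ ↦ (((hy i).const_add (z i)).norm.rpow_const
      (p := p.toReal) (.inr hq.le))
    simp only [norm_zero, Real.zero_rpow hq.ne', Finset.sum_const_zero, add_zero] at sum_y sum_add
    have := ((sum_add.add ((hd.rpow_const (.inr hq.le)).sub sum_y)).rpow_const
      (p := p.toReal⁻¹) (.inr (inv_nonneg.2 hq.le)))
    simpa only [← norm_sum_single_add_rpow hq, Real.rpow_rpow_inv (norm_nonneg _) hq.ne', sub_zero]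
      using this
  exact uniform.tendsto_of_eventually_tendsto (.of_forall truncated)
    (((lp.hasSum_norm hq z).add_const _).rpow_const (.inr (inv_nonneg.2 hq.le)))

variable [∀ i, NormedSpace ℝ (X i)] [∀ i, FiniteDimensional ℝ (X i)] {κ : Type*} [Infinite κ]

lemma exists_tendsto_coord_hyperfilter {x : κ → lp X p} {C : ℝ} (hx : ∀ k, ‖x k‖ ≤ C) (i : ι) :
    ∃ v, Tendsto (fun k ↦ x k i) (hyperfilter κ) (𝓝 v) := by
  have := FiniteDimensional.proper ℝ (X i)
  have mem_closedBall (k : κ) : x k i ∈ Metric.closedBall 0 C := mem_closedBall_zero_iff.2 <|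
    (lp.norm_apply_le_norm (zero_lt_one.trans_le Fact.out).ne' (x k) i).trans (hx k)
  obtain ⟨v, -, hv⟩ := (isCompact_closedBall 0 C).ultrafilter_le_nhds'
    ((hyperfilter κ).map fun k ↦ x k i) (Ultrafilter.mem_map.2 (univ_mem' mem_closedBall))
  exact ⟨v, hv⟩

theorem norm_add_sub_rpow_of_pairwise (hptop : p ≠ ∞) {x : κ → lp X p} {C : ℝ}
    (hx : ∀ k, ‖x k‖ ≤ C) {z : lp X p} {c d : ℝ} (hd : Pairwise fun k l ↦ ‖x k - x l‖ = d)
    (hc : Pairwise fun k l ↦ ‖z + (x k - x l)‖ = c) :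
    c ^ p.toReal = ‖z‖ ^ p.toReal + d ^ p.toReal := by
  let L : Filter (κ × κ) := (hyperfilter κ : Filter κ).curry (hyperfilter κ)
  have : L.NeBot := by
    rw [← frequently_true_iff_neBot, frequently_curry_iff]
    exact .of_forall fun _ ↦ (frequently_true_iff_neBot _).2 inferInstance
  have eventually_ne : ∀ᶠ kl in L, kl.1 ≠ kl.2 := eventually_curry_iff.2 <| .of_forall fun k ↦
    mem_of_superset (Set.finite_singleton k).compl_mem_hyperfilter fun _ ↦ Ne.symm
  have coord_zero (i : ι) : Tendsto (fun kl : κ × κ ↦ (x kl.1 - x kl.2) i) L (𝓝 0) := by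
    obtain ⟨v, hv⟩ := exists_tendsto_coord_hyperfilter hx i
    rw [← sub_self v]
    exact ((hv.comp tendsto_fst).sub (hv.comp tendsto_snd)).mono_left curry_le_prod
  have norm_tendsto : Tendsto (fun kl : κ × κ ↦ ‖x kl.1 - x kl.2‖) L (𝓝 d) :=
    tendsto_const_nhds.congr' (eventually_ne.mono fun _ h ↦ (hd h).symm)
  have norm_add_tendsto : Tendsto (fun kl : κ × κ ↦ ‖z + (x kl.1 - x kl.2)‖) L (𝓝 c) :=
    tendsto_const_nhds.congr' (eventually_ne.mono fun _ h ↦ (hc h).symm)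
  have hd0 : 0 ≤ d := ge_of_tendsto' norm_tendsto fun _ ↦ norm_nonneg _
  rw [tendsto_nhds_unique norm_add_tendsto
    (tendsto_norm_add_of_tendsto_coord_zero hptop coord_zero norm_tendsto z)]
  exact Real.rpow_inv_rpow (by positivity)
    (ENNReal.toReal_pos (zero_lt_one.trans_le Fact.out).ne' hptop).ne'

end BrezisLieb

theorem exists_norm_ne_of_coinSubgroup {ι : Type*} {X : ι → Type*} [∀ i, NormedAddCommGroup (X i)]
    [∀ i, NormedSpace ℝ (X i)] [∀ i, FiniteDimensional ℝ (X i)] {p : ℝ≥0∞} [Fact (1 ≤ p)]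
    (hptop : p ≠ ∞) (hp2 : p ≠ 2) (g : coinSubgroup p →+ lp X p) : ∃ x, ‖g x‖ ≠ ‖x‖ := by
  by_contra! norm_g
  have hp0 : p ≠ 0 := (zero_lt_one.trans_le Fact.out).ne'
  have hq : p.toReal ≠ 0 := (ENNReal.toReal_pos hp0 hptop).ne'
  let one : coinSubgroup p := ⟨_, AddSubgroup.subset_closure (Set.mem_insert _ _)⟩
  let heads (k : ℕ) : coinSubgroup p :=
    ⟨_, AddSubgroup.subset_closure (.inr (Set.mem_range_self k))⟩
  have norm_g_one : ‖g one‖ = 1 := (norm_g one).trans <|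
    (Lp.norm_const' p _ 1 hp0 hptop).trans (by simp)
  have norm_heads_le (k : ℕ) : ‖g (heads k)‖ ≤ 1 :=
    (norm_g _).trans_le (norm_headsIndicator_le k)
  have norm_sub : Pairwise fun k l ↦ ‖g (heads k) - g (heads l)‖ = (1 / 2) ^ p.toReal⁻¹ := by
    intro k l h
    rw [← map_sub, norm_g, Real.eq_rpow_inv (norm_nonneg _) (by norm_num) hq]
    have := norm_const_add_headsIndicator_sub_rpow hp0 hptop 0 h
    rw [map_zero, zero_add] at this
    refine this.trans ?_
    norm_num [hq]
  have norm_add_sub : Pairwise fun k l ↦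
      ‖g one + (g (heads k) - g (heads l))‖ = ((2 + 2 ^ p.toReal) / 4) ^ p.toReal⁻¹ := by
    intro k l h
    rw [← map_sub, ← map_add, norm_g, Real.eq_rpow_inv (norm_nonneg _) (by positivity) hq]
    refine (norm_const_add_headsIndicator_sub_rpow hp0 hptop 1 h).trans ?_
    norm_num [hq]
  have pythagoras := norm_add_sub_rpow_of_pairwise hptop norm_heads_le norm_sub norm_add_sub
  rw [norm_g_one, Real.one_rpow, Real.rpow_inv_rpow (by positivity) hq,
    Real.rpow_inv_rpow (by norm_num) hq] at pythagoras
  have two_rpow : (2 : ℝ) ^ p.toReal = 2 ^ (2 : ℝ) := by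
    rw [Real.rpow_two]
    linarith
  have toReal_eq : p.toReal = 2 :=
    Real.strictMono_rpow_of_base_gt_one one_lt_two |>.injective two_rpow
  exact hp2 (by rw [← ENNReal.ofReal_toReal hptop, toReal_eq, ENNReal.ofReal_ofNat])

theorem strictly_convex_lp_sum_not_isometrically_finitely_determined_general
    {ι : Type*} (p : ℝ≥0∞) [Fact (1 ≤ p)] (hptop : p ≠ ∞) (hp2 : p ≠ 2)
    (X : ι → Type*) [∀ i, NormedAddCommGroup (X i)] [∀ i, NormedSpace ℝ (X i)]
    [∀ i, FiniteDimensional ℝ (X i)] (hX : {i | Nontrivial (X i)}.Infinite)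
    [StrictConvexSpace ℝ (lp X p)] :
    ∃ (M : Type) (_ : MetricSpace M), MetricLocallyFinite M ∧
      (∀ S : Set M, S.Finite → ∃ f : S → lp X p, Isometry f) ∧
      ¬ ∃ f : M → lp X p, Isometry f := by
  let _ := Encodable.ofCountable (coinSubgroup p)
  refine ⟨dyadicNet (coinSubgroup p), inferInstance, metricLocallyFinite_dyadicNet _, ?_, ?_⟩
  · intro S hS
    have := hS.to_subtype
    obtain ⟨T, dist_T⟩ := exists_dist_eq_of_simpleFunc hptop hX fun x : S ↦
      (⟨x, coinSubgroup_le_simpleFunc (dyadicNet_subset _ x.1.2)⟩ : Lp.simpleFunc ℝ p coinMeasure)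
    exact ⟨T, .of_dist_eq dist_T⟩
  · rintro ⟨f, hf⟩
    obtain ⟨g, norm_g⟩ := exists_addMonoidHom_norm_eq_of_isometry_dyadicNet hf
    obtain ⟨x, hx⟩ := exists_norm_ne_of_coinSubgroup hptop hp2 g
    exact hx (norm_g x)

theorem strictly_convex_lp_sum_not_isometrically_finitely_determined
    (p : ℝ≥0∞) [Fact (1 ≤ p)] (hp1 : 1 < p) (hptop : p ≠ ∞) (hp2 : p ≠ 2)
    (X : ℕ → Type*) [∀ n, NormedAddCommGroup (X n)] [∀ n, NormedSpace ℝ (X n)]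
    [∀ n, FiniteDimensional ℝ (X n)]
    (hnested : ∀ n, ∃ J : X n →ₗᵢ[ℝ] X (n + 1), ¬ Function.Surjective J)
    [StrictConvexSpace ℝ (lp X p)] :
    ∃ (M : Type) (_ : MetricSpace M), MetricLocallyFinite M ∧
      (∀ S : Set M, S.Finite → ∃ f : S → lp X p, Isometry f) ∧
      ¬ ∃ f : M → lp X p, Isometry f := by
  have nontrivial_succ (n : ℕ) : Nontrivial (X (n + 1)) := by
    obtain ⟨J, hJ⟩ := hnested n
    by_contra h
    have := not_nontrivial_iff_subsingleton.1 h
    exact hJ (Function.surjective_to_subsingleton J)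
  exact strictly_convex_lp_sum_not_isometrically_finitely_determined_general p hptop hp2 X <|
    (Set.infinite_range_of_injective Nat.succ_injective).mono
      (Set.range_subset_iff.2 nontrivial_succ)
end
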